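/- Let T ≥ 2 be an integer, ξ_1,…,ξ_T > 0 real numbers, and ρ ∈ [0,1). Then d_t > ρ for every t = 2,…,T, and δ_t > ρ for every t = 1,…,T−1; equivalently, ρ/d_t < 1 and ρ/δ_t < 1 for those indices. -/

import Mathlib

/-- One step of either recursion preserves the lower bound `1`. -/
theorem one_lt_add_sq_add_sub_sq_div {ρ x y : ℝ} (hx : 0 < x) (hy : 1 < y) :
    1 < 1 + ρ ^ 2 + x - ρ ^ 2 / y := by
  have h : ρ ^ 2 / y ≤ ρ ^ 2 := div_le_self (sq_nonneg ρ) hy.le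
  linarith

/-- for `ρ ∈ [0,1)`, `d_t > ρ` for `t = 2,…,T` and `δ_t > ρ` for
`t = 1,…,T−1`; equivalently `ρ/d_t < 1` and `ρ/δ_t < 1` for those indices. -/
theorem stmt3 (T : ℕ) (hT : 2 ≤ T) (ρ : ℝ) (hρ1 : 0 ≤ ρ) (hρ2 : ρ < 1)
    (ξ d δ : ℕ → ℝ)
    (hξ : ∀ t, 1 ≤ t → t ≤ T → 0 < ξ t)
    (hdT : d T = 1 + ξ T)
    (hd : ∀ t, 2 ≤ t → t ≤ T - 1 → d t = 1 + ρ ^ 2 + ξ t - ρ ^ 2 / d (t + 1))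
    (hd1 : d 1 = 1 + ξ 1 - ρ ^ 2 / d 2)
    (hδ1 : δ 1 = 1 + ξ 1)
    (hδ : ∀ t, 2 ≤ t → t ≤ T - 1 → δ t = 1 + ρ ^ 2 + ξ t - ρ ^ 2 / δ (t - 1))
    (hδT : δ T = 1 + ξ T - ρ ^ 2 / δ (T - 1)) :
    (∀ t, 2 ≤ t → t ≤ T → ρ < d t) ∧
    (∀ t, 1 ≤ t → t ≤ T - 1 → ρ < δ t) ∧
    (∀ t, 2 ≤ t → t ≤ T → ρ / d t < 1) ∧
    (∀ t, 1 ≤ t → t ≤ T - 1 → ρ / δ t < 1) := by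
  have one_lt_d : ∀ t, 2 ≤ t → t ≤ T → 1 < d t := by
    intro t ht htT
    induction htT using Nat.decreasingInduction with
    | self => linarith [hξ T (by omega) le_rfl]
    | of_succ k hk ih =>
      rw [hd k ht (by omega)]
      exact one_lt_add_sq_add_sub_sq_div (hξ k (by omega) hk.le) (ih (by omega))
  have one_lt_δ : ∀ t, 1 ≤ t → t ≤ T - 1 → 1 < δ t := by
    intro t ht
    induction t, ht using Nat.le_induction with
    | base => intro _; linarith [hξ 1 le_rfl (by omega)]
    | succ k hk ih =>
      intro hkT
      rw [hδ (k + 1) (by omega) hkT, Nat.add_sub_cancel]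
      exact one_lt_add_sq_add_sub_sq_div (hξ (k + 1) (by omega) (by omega)) (ih (by omega))
  have div_lt_one_of_one_lt {x : ℝ} (hx : 1 < x) : ρ / x < 1 :=
    (div_lt_one (zero_lt_one.trans hx)).2 (hρ2.trans hx)
  exact ⟨fun t h h' => hρ2.trans (one_lt_d t h h'), fun t h h' => hρ2.trans (one_lt_δ t h h'),
    fun t h h' => div_lt_one_of_one_lt (one_lt_d t h h'),
    fun t h h' => div_lt_one_of_one_lt (one_lt_δ t h h')⟩
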